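/- Let x₁, x₂, y₁, y₂ be positive real numbers, and let i ∈ ℂ be the imaginary unit. The ℚ-vector subspace of ℂ (viewed as a ℚ-vector space) spanned by the four complex numbers x₁, x₂, y₁·i, y₂·i has dimension 2 if and only if both x₁/x₂ and y₁/y₂ are rational numbers. -/

import Mathlib

open Complex

/-!
The span is the direct sum of the `K`-span of the two real numbers and the `K`-span of the two
imaginary ones. Both summands are nonzero, so the total dimension is two exactly when each of them
is a line, that is, when each pair of generators has its quotient in `K`.
-/

section LinearAlgebra

variable {K V : Type*} [DivisionRing K] [AddCommGroup V] [Module K V]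

theorem finrank_span_pair_eq_one_iff {v w : V} (hw : w ≠ 0) :
    Module.finrank K (Submodule.span K {v, w}) = 1 ↔ v ∈ Submodule.span K {w} := by
  constructor
  · intro h
    have : FiniteDimensional K (Submodule.span K {v, w}) :=
      .span_of_finite K (Set.toFinite _)
    have span_eq : Submodule.span K {w} = Submodule.span K {v, w} :=
      Submodule.eq_of_le_of_finrank_eq (Submodule.span_mono (Set.subset_insert v {w}))
        ((finrank_span_singleton hw).trans h.symm)
    exact span_eq ▸ Submodule.mem_span_of_mem (Set.mem_insert v {w})
  · intro h
    rw [Submodule.span_insert_eq_span h, finrank_span_singleton hw]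

theorem finrank_sup_eq_two_iff_of_disjoint {P Q : Submodule K V} [FiniteDimensional K P]
    [FiniteDimensional K Q] (hPQ : Disjoint P Q) (hP : P ≠ ⊥) (hQ : Q ≠ ⊥) :
    Module.finrank K ↥(P ⊔ Q) = 2 ↔ Module.finrank K P = 1 ∧ Module.finrank K Q = 1 := by
  have finrank_sup := Submodule.finrank_sup_add_finrank_inf_eq P Q
  rw [hPQ.eq_bot, finrank_bot, add_zero] at finrank_sup
  have one_le_P := Submodule.one_le_finrank_iff.mpr hP
  have one_le_Q := Submodule.one_le_finrank_iff.mpr hQ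
  lia

theorem finrank_span_pair_union_pair_eq_two_iff {v₁ v₂ w₁ w₂ : V}
    (hvw : Disjoint (Submodule.span K {v₁, v₂}) (Submodule.span K {w₁, w₂}))
    (hv₂ : v₂ ≠ 0) (hw₂ : w₂ ≠ 0) :
    Module.finrank K (Submodule.span K {v₁, v₂, w₁, w₂}) = 2 ↔
      v₁ ∈ Submodule.span K {v₂} ∧ w₁ ∈ Submodule.span K {w₂} := by
  have span_pair_ne_bot {a b : V} (hb : b ≠ 0) : Submodule.span K {a, b} ≠ ⊥ :=
    Submodule.ne_bot_iff _ |>.mpr ⟨b, Submodule.mem_span_of_mem (Set.mem_insert_of_mem a rfl), hb⟩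
  have (a b : V) : FiniteDimensional K (Submodule.span K {a, b}) :=
    .span_of_finite K (Set.toFinite _)
  have span_eq_sup : Submodule.span K {v₁, v₂, w₁, w₂} =
      Submodule.span K {v₁, v₂} ⊔ Submodule.span K {w₁, w₂} := by
    rw [← Submodule.span_union, Set.insert_union, Set.singleton_union]
  rw [span_eq_sup, finrank_sup_eq_two_iff_of_disjoint hvw (span_pair_ne_bot hv₂)
    (span_pair_ne_bot hw₂), finrank_span_pair_eq_one_iff hv₂, finrank_span_pair_eq_one_iff hw₂]

end LinearAlgebra

theorem mem_span_singleton_iff_div_eq_algebraMap {K L : Type*} [CommSemiring K] [DivisionRing L]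
    [Algebra K L] {a b : L} (hb : b ≠ 0) :
    a ∈ Submodule.span K {b} ↔ ∃ q : K, a / b = algebraMap K L q := by
  simp only [Submodule.mem_span_singleton, Algebra.smul_def, div_eq_iff hb, eq_comm]

theorem disjoint_span_of_im_eq_zero_of_re_eq_zero {K : Type*} [Semiring K] [SMul K ℝ]
    [Module K ℂ] [IsScalarTower K ℝ ℂ] {s t : Set ℂ} (hs : ∀ z ∈ s, z.im = 0)
    (ht : ∀ z ∈ t, z.re = 0) : Disjoint (Submodule.span K s) (Submodule.span K t) := by
  have span_s_le : Submodule.span K s ≤ (LinearMap.ker imLm).restrictScalars K :=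
    Submodule.span_le.mpr hs
  have span_t_le : Submodule.span K t ≤ (LinearMap.ker reLm).restrictScalars K :=
    Submodule.span_le.mpr ht
  exact Submodule.disjoint_def.mpr fun z hzs hzt ↦ Complex.ext (span_t_le hzt) (span_s_le hzs)

theorem ofReal_eq_algebraMap_iff {K : Type*} [CommSemiring K] [Algebra K ℝ] [Algebra K ℂ]
    [IsScalarTower K ℝ ℂ] {r : ℝ} {q : K} :
    (r : ℂ) = algebraMap K ℂ q ↔ r = algebraMap K ℝ q := by
  rw [IsScalarTower.algebraMap_apply K ℝ ℂ, coe_algebraMap, ofReal_inj]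

theorem span_dim_two_iff_ratios_rational_general {K : Type*} [Field K] [Algebra K ℝ] [Algebra K ℂ]
    [IsScalarTower K ℝ ℂ] (x₁ y₁ : ℝ) {x₂ y₂ : ℝ} (hx₂ : x₂ ≠ 0) (hy₂ : y₂ ≠ 0) :
    Module.finrank K (Submodule.span K {(x₁ : ℂ), (x₂ : ℂ), (y₁ : ℂ) * I, (y₂ : ℂ) * I}) = 2 ↔
      (∃ q : K, x₁ / x₂ = algebraMap K ℝ q) ∧ (∃ q : K, y₁ / y₂ = algebraMap K ℝ q) := by
  have real_disjoint_imaginary : Disjoint (Submodule.span K {(x₁ : ℂ), (x₂ : ℂ)})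
      (Submodule.span K {(y₁ : ℂ) * I, (y₂ : ℂ) * I}) :=
    disjoint_span_of_im_eq_zero_of_re_eq_zero (by simp) (by simp)
  have x₂_ne_zero : (x₂ : ℂ) ≠ 0 := ofReal_ne_zero.mpr hx₂
  have y₂_mul_I_ne_zero : (y₂ : ℂ) * I ≠ 0 := mul_ne_zero (ofReal_ne_zero.mpr hy₂) I_ne_zero
  rw [finrank_span_pair_union_pair_eq_two_iff real_disjoint_imaginary x₂_ne_zero y₂_mul_I_ne_zero,
    mem_span_singleton_iff_div_eq_algebraMap x₂_ne_zero,
    mem_span_singleton_iff_div_eq_algebraMap y₂_mul_I_ne_zero, mul_div_mul_right _ _ I_ne_zero]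
  simp only [← ofReal_div, ofReal_eq_algebraMap_iff]

/-- For positive reals x₁, x₂, y₁, y₂, the ℚ-span of {x₁, x₂, y₁·i, y₂·i} in ℂ is
two-dimensional iff x₁/x₂ and y₁/y₂ are both rational. -/
theorem span_dim_two_iff_ratios_rational (x₁ x₂ y₁ y₂ : ℝ)
    (hx₁ : 0 < x₁) (hx₂ : 0 < x₂) (hy₁ : 0 < y₁) (hy₂ : 0 < y₂) :
    Module.finrank ℚ
        ↥(Submodule.span ℚ ({(x₁ : ℂ), (x₂ : ℂ), (y₁ : ℂ) * Complex.I,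
          (y₂ : ℂ) * Complex.I} : Set ℂ)) = 2 ↔
      (∃ q : ℚ, x₁ / x₂ = (q : ℝ)) ∧ (∃ q : ℚ, y₁ / y₂ = (q : ℝ)) :=
  span_dim_two_iff_ratios_rational_general x₁ y₁ hx₂.ne' hy₂.ne'
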